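/- In U_3, the element Sc := [1,4,2,5,3,6] − (35/2)·([1,4,2,5] + [1,4,3,6] + [2,5,3,6]) + (259/2)·([1,4] + [2,5] + [3,6]) − 675/4 satisfies σ_a Sc + Sc σ_a = 0 for every a ∈ {1, 2, 3, 4, 5, 6}. (The Scasimir of U(osp(1|6)).) -/

import Mathlib

open scoped BigOperators TensorProduct
open Nat

noncomputable section

/-- The symplectic metric `g` of `osp(1|2n)` (0-indexed). -/
def gmat (n : ℕ) (a b : Fin (2*n)) : ℚ :=
  if (a:ℕ) < n ∧ (b:ℕ) = (a:ℕ) + n then -1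
  else if (b:ℕ) < n ∧ (a:ℕ) = (b:ℕ) + n then 1
  else 0

/-- The defining relations of `U(osp(1|2n))`:
`(σₐσ_b + σ_bσₐ)σ_c - σ_c(σₐσ_b + σ_bσₐ) = -g_{ac} σ_b - g_{bc} σₐ`. -/
inductive OspRel (n : ℕ) : FreeAlgebra ℚ (Fin (2*n)) → FreeAlgebra ℚ (Fin (2*n)) → Prop
  | rel (a b c : Fin (2*n)) : OspRel n
      ((FreeAlgebra.ι ℚ a * FreeAlgebra.ι ℚ b + FreeAlgebra.ι ℚ b * FreeAlgebra.ι ℚ a)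
          * FreeAlgebra.ι ℚ c)
      (FreeAlgebra.ι ℚ c *
          (FreeAlgebra.ι ℚ a * FreeAlgebra.ι ℚ b + FreeAlgebra.ι ℚ b * FreeAlgebra.ι ℚ a)
        - algebraMap ℚ (FreeAlgebra ℚ (Fin (2*n))) (gmat n a c) * FreeAlgebra.ι ℚ b
        - algebraMap ℚ (FreeAlgebra ℚ (Fin (2*n))) (gmat n b c) * FreeAlgebra.ι ℚ a)

/-- The universal enveloping superalgebra `U(osp(1|2n))`. -/
abbrev U (n : ℕ) := RingQuot (OspRel n)

/-- The fermionic generators `σₐ`. -/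
def σ (n : ℕ) (a : Fin (2*n)) : U n :=
  RingQuot.mkAlgHom ℚ (OspRel n) (FreeAlgebra.ι ℚ a)

/-- The bosonic generators `σ_{ab} = σₐσ_b + σ_bσₐ`. -/
def σσ (n : ℕ) (a b : Fin (2*n)) : U n := σ n a * σ n b + σ n b * σ n a

/-- The antisymmetrized monomial `[a₁ … a_p]`. -/
def brkt (n : ℕ) (p : ℕ) (a : Fin p → Fin (2*n)) : U n :=
  ∑ s : Equiv.Perm (Fin p),
    (Equiv.Perm.sign s : ℤ) • (List.ofFn fun i => σ n (a (s i))).prod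

/-- `Ω`, the span of all the antisymmetrized monomials. -/
def Omega (n : ℕ) : Submodule ℚ (U n) :=
  Submodule.span ℚ {x | ∃ p, ∃ a : Fin p → Fin (2*n), x = brkt n p a}


/-- The Scasimir of `U(osp(1|6))`:
`Sc = [1,4,2,5,3,6] − (35/2)([1,4,2,5]+[1,4,3,6]+[2,5,3,6]) + (259/2)([1,4]+[2,5]+[3,6]) − 675/4`
(0-indexed below). -/
def Sc3 : U 3 :=
  brkt 3 6 ![⟨0, by omega⟩, ⟨3, by omega⟩, ⟨1, by omega⟩, ⟨4, by omega⟩, ⟨2, by omega⟩,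
      ⟨5, by omega⟩]
  - ((35:ℚ)/2) • (brkt 3 4 ![⟨0, by omega⟩, ⟨3, by omega⟩, ⟨1, by omega⟩, ⟨4, by omega⟩]
      + brkt 3 4 ![⟨0, by omega⟩, ⟨3, by omega⟩, ⟨2, by omega⟩, ⟨5, by omega⟩]
      + brkt 3 4 ![⟨1, by omega⟩, ⟨4, by omega⟩, ⟨2, by omega⟩, ⟨5, by omega⟩])
  + ((259:ℚ)/2) • (brkt 3 2 ![⟨0, by omega⟩, ⟨3, by omega⟩]
      + brkt 3 2 ![⟨1, by omega⟩, ⟨4, by omega⟩]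
      + brkt 3 2 ![⟨2, by omega⟩, ⟨5, by omega⟩])
  - ((675:ℚ)/4) • 1

/-!
In `A ⊗ Λ(θ)` put `t = ∑ uⱼ θⱼ`, `w = ∑ g_{bc} θ_c θ_b` and `γₐ = ∑ g_{ac} θ_c`. The relations of
`osp(1|2n)` become the single triple relation `{t, {t, uₐ}} = w uₐ + γₐ t`. Together with
`∂ₐ t = uₐ` and `∂ₐ w = -2 γₐ`, it yields by induction on `m`
`2 ∂ₐ (t Pₘ) = (2m + 1) (uₐ Pₘ + Pₘ uₐ)`, where `Pₘ = ∏_{k < m} (t² - (k + 1/2)² w)`.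
Since `t Pₙ` has degree `2n + 1` in the `2n` Grassmann variables, it vanishes, so `uₐ` anticommutes
with `Pₙ` and therefore with its Berezin integral. For `n = 3` one has
`P₃ = t⁶ - 35/4 t⁴ w + 259/16 t² w² - 225/64 w³` and `w = 2 ∑ᵢ θᵢ θᵢ₊₃`, whose integral is the
Scasimir.
-/

section CentralFactorial

theorem commute_sq_of_anticommute {B : Type*} [Ring B] {x y : B} (h : x * y = -(y * x)) :
    Commute x (y ^ 2) := by
  rw [commute_iff_eq, pow_two, ← mul_assoc, h, neg_mul, mul_assoc, h, mul_neg, neg_neg, mul_assoc]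

variable {K B : Type*} [Field K] [Ring B] [Algebra K B]

variable (K) in
/-- The central factorial `∏ k < n, (t² - (k + 1/2)² w)`, homogenized so that `w` has the degree of
`t²`; the factor of index `k` is multiplied on the left of the earlier ones. -/
def centralFactorial (t w : B) : ℕ → B
  | 0 => 1
  | n + 1 => (t ^ 2 - ((n : K) + 1 / 2) ^ 2 • w) * centralFactorial t w n

theorem quadratic_mul_centralFactorial_mul (t w s : B) (n : ℕ) :
    (t ^ 2 - ((n : K) + 1 / 2) ^ 2 • w) * (centralFactorial K t w n * s)
      = centralFactorial K t w (n + 1) * s :=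
  (mul_assoc _ _ _).symm

theorem commute_centralFactorial {t w x : B} (ht : Commute x (t ^ 2)) (hw : Commute x w) (n : ℕ) :
    Commute x (centralFactorial K t w n) := by
  induction n with
  | zero => exact Commute.one_right x
  | succ n ih => exact (ht.sub_right (hw.smul_right _)).mul_right ih

theorem commute_self_centralFactorial {t w : B} (h : Commute w t) (n : ℕ) :
    Commute t (centralFactorial K t w n) :=
  commute_centralFactorial (Commute.self_pow t 2) h.symm n

theorem commute_weight_centralFactorial {t w : B} (h : Commute w t) (n : ℕ) :
    Commute w (centralFactorial K t w n) :=
  commute_centralFactorial (h.pow_right 2) (Commute.refl w) n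

theorem mul_centralFactorial_mul_quadratic {t w : B} (h : Commute w t) (s : B) (n : ℕ) :
    s * centralFactorial K t w n * (t ^ 2 - ((n : K) + 1 / 2) ^ 2 • w)
      = s * centralFactorial K t w (n + 1) := by
  have hQ : Commute (t ^ 2 - ((n : K) + 1 / 2) ^ 2 • w) (centralFactorial K t w n) :=
    ((commute_self_centralFactorial h n).pow_left 2).sub_left
      ((commute_weight_centralFactorial h n).smul_left _)
  rw [mul_assoc, ← hQ.eq, centralFactorial]

/-- The relation `{t, {t, x}} = w x + z`. In `U(osp(1|2n)) ⊗ Λ` it is the contraction of the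
defining relations with Grassmann variables, where `x` is an odd generator and `t` is the generic
odd element. -/
def TripleRelation (t w x z : B) : Prop :=
  t * (t * x + x * t) + (t * x + x * t) * t = w * x + z

theorem TripleRelation.mul_left {t w x z p : B} (h : TripleRelation t w x z) (ht : Commute p t)
    (hw : Commute p w) : TripleRelation t w (p * x) (p * z) := by
  unfold TripleRelation at h ⊢
  have := congrArg (p * ·) h
  simp only [mul_add, add_mul, mul_assoc, ht.left_comm, hw.left_comm] at this ⊢
  exact this

theorem TripleRelation.mul_right {t w x z p : B} (h : TripleRelation t w x z)
    (ht : Commute p t) : TripleRelation t w (x * p) (z * p) := by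
  unfold TripleRelation at h ⊢
  have := congrArg (· * p) h
  simp only [mul_add, add_mul, mul_assoc, ht.eq] at this ⊢
  exact this

theorem deriv_mul_quadratic_mul {t w s γ p : B} (hwt : Commute w t) (hp : Commute t p)
    (D : B →ₗ[K] B) (D_t : ∀ x, D (t * x) = s * x - t * D x)
    (D_w : ∀ x, D (w * x) = w * D x - (2 : K) • (γ * x)) (c : K) :
    D (t * ((t ^ 2 - c • w) * p))
      = (t ^ 2 - c • w) * D (t * p) + (s * p * t ^ 2 - t * (s * p) * t)
        + (2 * c) • (γ * t * p) := by
  have hQ : Commute t (t ^ 2 - c • w) := (Commute.self_pow t 2).sub_right (hwt.symm.smul_right c)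
  have hst : s * (t * (t * p)) = s * p * t ^ 2 := by
    rw [pow_two, mul_assoc, hp.eq, hp.left_comm]
  have hts : t * (s * (t * p)) = t * (s * p) * t := by rw [hp.eq, mul_assoc, mul_assoc]
  rw [hQ.left_comm, ← hst, ← hts]
  simp only [pow_two, sub_mul, mul_assoc, smul_mul_assoc, map_sub, map_smul, D_t, D_w, mul_sub]
  module

variable [CharZero K]

theorem centralFactorial_three {t w : B} (h : Commute w t) :
    centralFactorial K t w 3 = t ^ 6 - (35 / 4 : K) • (t ^ 4 * w)
      + (259 / 16 : K) • (t ^ 2 * w ^ 2) - (225 / 64 : K) • w ^ 3 := by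
  simp only [centralFactorial, pow_succ, pow_zero, one_mul, mul_one, mul_sub, sub_mul, mul_assoc,
    smul_mul_assoc, mul_smul_comm, smul_sub, h.eq, h.left_comm]
  push_cast
  module

theorem TripleRelation.quadratic_mul {t w x z : B} (h : TripleRelation t w x z) (m : K) :
    (4 : K) • ((t ^ 2 - (m + 1 / 2) ^ 2 • w) * x)
      = (2 * m + 3) • (t * (t * x - x * t - (2 * m) • (t * x + x * t)))
        + (2 * m + 1) • ((t * x - x * t - (2 * m) • (t * x + x * t)) * t)
        + (2 * m + 1) ^ 2 • z := by
  unfold TripleRelation at h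
  simp only [pow_two, mul_add, add_mul, mul_sub, sub_mul, mul_assoc, smul_mul_assoc,
    mul_smul_comm, smul_add, smul_sub] at h ⊢
  linear_combination (norm := module) ((2 * m + 1) ^ 2) • h

theorem TripleRelation.mul_quadratic {t w x z : B} (h : TripleRelation t w x z)
    (hw : Commute w x) (m : K) :
    (4 : K) • (x * (t ^ 2 - (m + 1 / 2) ^ 2 • w))
      = -(2 * m + 1) • (t * (t * x - x * t + (2 * m) • (t * x + x * t)))
        - (2 * m + 3) • ((t * x - x * t + (2 * m) • (t * x + x * t)) * t)
        + (2 * m + 1) ^ 2 • z := by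
  unfold TripleRelation at h
  simp only [pow_two, mul_add, add_mul, mul_sub, sub_mul, mul_assoc, smul_mul_assoc,
    mul_smul_comm, smul_add, smul_sub, ← hw.eq] at h ⊢
  linear_combination (norm := module) ((2 * m + 1) ^ 2) • h

theorem TripleRelation.commutator_quadratic {t w x y z : B} (hx : TripleRelation t w x z)
    (hy : TripleRelation t w y z) (hw : Commute w y) (hz : z * t = -(t * z)) (m : K)
    (h : t * x - x * t - (2 * m) • (t * x + x * t)
      = t * y - y * t + (2 * m) • (t * y + y * t)) :
    t * ((t ^ 2 - (m + 1 / 2) ^ 2 • w) * x) - (t ^ 2 - (m + 1 / 2) ^ 2 • w) * x * t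
        - (2 * (m + 1)) • (t * ((t ^ 2 - (m + 1 / 2) ^ 2 • w) * x)
          + (t ^ 2 - (m + 1 / 2) ^ 2 • w) * x * t)
      = t * (y * (t ^ 2 - (m + 1 / 2) ^ 2 • w)) - y * (t ^ 2 - (m + 1 / 2) ^ 2 • w) * t
        + (2 * (m + 1)) • (t * (y * (t ^ 2 - (m + 1 / 2) ^ 2 • w))
          + y * (t ^ 2 - (m + 1 / 2) ^ 2 • w) * t) := by
  have hx' := hx.quadratic_mul m
  have hy' := hy.mul_quadratic hw m
  rw [h] at hx'
  generalize t * y - y * t + (2 * m) • (t * y + y * t) = r at hx' hy'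
  generalize (t ^ 2 - (m + 1 / 2) ^ 2 • w) * x = x' at hx' ⊢
  generalize y * (t ^ 2 - (m + 1 / 2) ^ 2 • w) = y' at hy' ⊢
  replace hx' : x' = (1 / 4 : K) • ((2 * m + 3) • (t * r) + (2 * m + 1) • (r * t)
      + (2 * m + 1) ^ 2 • z) := by linear_combination (norm := module) (1 / 4 : K) • hx'
  replace hy' : y' = (1 / 4 : K) • (-(2 * m + 1) • (t * r) - (2 * m + 3) • (r * t)
      + (2 * m + 1) ^ 2 • z) := by linear_combination (norm := module) (1 / 4 : K) • hy'
  simp only [hx', hy', mul_add, add_mul, mul_sub, sub_mul, smul_mul_assoc, mul_smul_comm,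
    mul_assoc, hz]
  module

theorem commutator_centralFactorial {t w s z : B} (h : TripleRelation t w s z)
    (hwt : Commute w t) (hws : Commute w s) (hwz : Commute w z) (hz : z * t = -(t * z)) (n : ℕ) :
    t * (centralFactorial K t w n * s) - centralFactorial K t w n * s * t
        - (2 * n : K) • (t * (centralFactorial K t w n * s) + centralFactorial K t w n * s * t)
      = t * (s * centralFactorial K t w n) - s * centralFactorial K t w n * t
        + (2 * n : K) •
          (t * (s * centralFactorial K t w n) + s * centralFactorial K t w n * t) := by
  induction n with
  | zero => simp [centralFactorial]
  | succ n ih =>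
    have hPt : Commute t (centralFactorial K t w n) := commute_self_centralFactorial hwt n
    have hPw : Commute w (centralFactorial K t w n) := commute_weight_centralFactorial hwt n
    have hPz : Commute z (centralFactorial K t w n) :=
      commute_centralFactorial (commute_sq_of_anticommute hz) hwz.symm n
    have hx : TripleRelation t w (centralFactorial K t w n * s) (z * centralFactorial K t w n) :=
      hPz.eq ▸ h.mul_left hPt.symm hPw.symm
    have hstep := hx.commutator_quadratic (h.mul_right hPt.symm) (hws.mul_right hPw)
      (by rw [mul_assoc, ← hPt.eq, ← mul_assoc, hz, neg_mul, mul_assoc]) (n : K) ih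
    rwa [quadratic_mul_centralFactorial_mul, mul_centralFactorial_mul_quadratic hwt,
      ← Nat.cast_succ] at hstep

theorem TripleRelation.quadratic_mul_add {t w x y z : B} (hx : TripleRelation t w x z)
    (hy : TripleRelation t w y z) (hw : Commute w y) (m : K)
    (h : t * x - x * t - (2 * m) • (t * x + x * t)
      = t * y - y * t + (2 * m) • (t * y + y * t)) :
    (2 * m + 1) • ((t ^ 2 - (m + 1 / 2) ^ 2 • w) * (y + x))
        + (2 : K) • (y * t ^ 2 - t * y * t) + (2 * m + 1) ^ 2 • z
      = (2 * m + 3) • (y * (t ^ 2 - (m + 1 / 2) ^ 2 • w)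
        + (t ^ 2 - (m + 1 / 2) ^ 2 • w) * x) := by
  have hx' := hx.quadratic_mul m
  rw [h] at hx'
  rw [mul_add, smul_add, smul_add]
  generalize (t ^ 2 - (m + 1 / 2) ^ 2 • w) * x = x' at hx' ⊢
  unfold TripleRelation at hy
  simp only [pow_two, mul_add, add_mul, mul_sub, sub_mul, mul_assoc, smul_mul_assoc,
    mul_smul_comm, smul_add, smul_sub, ← hw.eq] at hy hx' ⊢
  linear_combination (norm := module) (-1 / 2 : K) • hx' - ((2 * m + 1) ^ 2 / 2) • hy

theorem deriv_mul_centralFactorial {t w s γ : B} (h : TripleRelation t w s (γ * t))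
    (hwt : Commute w t) (hws : Commute w s) (hwγ : Commute w γ) (hγ : γ * t = -(t * γ))
    (D : B →ₗ[K] B) (D_one : D 1 = 0) (D_t : ∀ x, D (t * x) = s * x - t * D x)
    (D_w : ∀ x, D (w * x) = w * D x - (2 : K) • (γ * x)) (n : ℕ) :
    (2 : K) • D (t * centralFactorial K t w n)
      = (2 * n + 1 : K) • (s * centralFactorial K t w n + centralFactorial K t w n * s) := by
  induction n with
  | zero =>
    have hDt : D t = s := by simpa [D_one] using D_t 1
    simp [centralFactorial, hDt, two_smul]
  | succ n ih =>
    set P := centralFactorial K t w n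
    have hz : γ * t * t = -(t * (γ * t)) := by rw [hγ, neg_mul, mul_assoc, hγ]
    have hwz : Commute w (γ * t) := hwγ.mul_right hwt
    have hPt : Commute t P := commute_self_centralFactorial hwt n
    have hPw : Commute w P := commute_weight_centralFactorial hwt n
    have hPz : Commute (γ * t) P :=
      commute_centralFactorial (commute_sq_of_anticommute hz) hwz.symm n
    have hx : TripleRelation t w (P * s) (γ * t * P) := hPz.eq ▸ h.mul_left hPt.symm hPw.symm
    have key := hx.quadratic_mul_add (h.mul_right hPt.symm) (hws.mul_right hPw) (n : K)
      (commutator_centralFactorial h hwt hws hwz hz n)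
    rw [quadratic_mul_centralFactorial_mul, mul_centralFactorial_mul_quadratic hwt] at key
    have hD : D (t * centralFactorial K t w (n + 1)) = _ :=
      deriv_mul_quadratic_mul hwt hPt D D_t D_w (((n : K) + 1 / 2) ^ 2)
    rw [hD, smul_add, smul_add, ← mul_smul_comm, ih, mul_smul_comm]
    push_cast
    linear_combination (norm := module) key

end CentralFactorial

section BaseChange

variable {R A L : Type*} [CommRing R] [Ring A] [Algebra R A] [Ring L] [Algebra R L]

theorem one_tmul_mul_smul (a : A) (l : L) (x : A ⊗[R] L) :
    (1 ⊗ₜ[R] l) * a • x = a • ((1 ⊗ₜ[R] l) * x) := by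
  induction x with
  | zero => simp only [smul_zero, mul_zero]
  | add x y hx hy => simp only [smul_add, mul_add, hx, hy]
  | tmul b m => simp [TensorProduct.smul_tmul']

theorem mul_mem_baseChange {p q : Submodule R L} {x y : A ⊗[R] L} (hx : x ∈ p.baseChange A)
    (hy : y ∈ q.baseChange A) : x * y ∈ (p * q).baseChange A := by
  rw [Submodule.baseChange_eq_span] at hx hy
  induction hx using Submodule.span_induction with
  | zero => rw [zero_mul]; exact zero_mem _
  | add x₁ x₂ _ _ h₁ h₂ => rw [add_mul]; exact add_mem h₁ h₂
  | smul a x _ h => rw [smul_mul_assoc]; exact Submodule.smul_mem _ a h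
  | mem x hx =>
    obtain ⟨l, hl, rfl⟩ := hx
    induction hy using Submodule.span_induction with
    | zero => rw [mul_zero]; exact zero_mem _
    | add y₁ y₂ _ _ h₁ h₂ => rw [mul_add]; exact add_mem h₁ h₂
    | smul a y _ h =>
      rw [TensorProduct.mk_apply, one_tmul_mul_smul]
      exact Submodule.smul_mem _ a h
    | mem y hy =>
      obtain ⟨m, hm, rfl⟩ := hy
      simpa using Submodule.tmul_mem_baseChange_of_mem (1 : A) (Submodule.mul_mem_mul hl hm)

end BaseChange

theorem centralFactorial_mem_baseChange {K A L : Type*} [Field K] [Ring A] [Algebra K A] [Ring L]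
    [Algebra K L] {p : Submodule K L} {t w : A ⊗[K] L} (ht : t ∈ p.baseChange A)
    (hw : w ∈ (p ^ 2).baseChange A) (n : ℕ) :
    centralFactorial K t w n ∈ (p ^ (2 * n)).baseChange A := by
  induction n with
  | zero =>
    have h1 : (1 : L) ∈ p ^ 0 := by rw [pow_zero]; exact Submodule.one_le.mp le_rfl
    exact Submodule.tmul_mem_baseChange_of_mem (1 : A) h1
  | succ n ih =>
    rw [mul_add, mul_one, add_comm, pow_add]
    refine mul_mem_baseChange (sub_mem ?_ (Submodule.smul_of_tower_mem _ _ hw)) ih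
    rw [pow_two, pow_two]
    exact mul_mem_baseChange ht ht

section Grassmann

open ExteriorAlgebra

section ExteriorAlgebra

variable {R M : Type*} [CommRing R] [AddCommGroup M] [Module R M]

theorem exteriorPower_eq_bot_of_finrank_lt [Nontrivial R] [Module.Free R M] [Module.Finite R M]
    {k : ℕ} (h : Module.finrank R M < k) : ⋀[R]^k M = ⊥ := by
  have h0 : Module.finrank R (⋀[R]^k M) = 0 := by
    rw [exteriorPower.finrank_eq, Nat.choose_eq_zero_of_lt h]
  rw [← Submodule.subsingleton_iff_eq_bot]
  exact (Module.finrank_eq_zero_iff_of_free R _).mp h0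

theorem ι_mul_ι_swap (x y : M) : ι R x * ι R y = -(ι R y * ι R x) :=
  eq_neg_of_add_eq_zero_left (ι_add_mul_swap x y)

theorem commute_ι_mul_ι (x y z : M) : Commute (ι R x * ι R y) (ι R z) := by
  rw [commute_iff_eq, mul_assoc, ι_mul_ι_swap y z, mul_neg, ← mul_assoc, ι_mul_ι_swap x z, neg_mul,
    neg_neg, mul_assoc]

end ExteriorAlgebra

variable {R J A : Type*} [CommRing R] [Ring A] [Algebra R A]

variable (R A) in
/-- The left derivative `∂/∂θₐ` on Grassmann polynomials with coefficients in `A`. -/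
def grassmannDeriv (a : J) :
    A ⊗[R] ExteriorAlgebra R (J → R) →ₗ[R] A ⊗[R] ExteriorAlgebra R (J → R) :=
  LinearMap.lTensor A (CliffordAlgebra.contractLeft (Q := 0) (LinearMap.proj a))

theorem grassmannDeriv_one (a : J) : grassmannDeriv R A a 1 = 0 := by
  rw [Algebra.TensorProduct.one_def, grassmannDeriv, LinearMap.lTensor_tmul,
    CliffordAlgebra.contractLeft_one, TensorProduct.tmul_zero]

theorem grassmannDeriv_tmul_ι_mul (a : J) (v : A) (f : J → R)
    (x : A ⊗[R] ExteriorAlgebra R (J → R)) :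
    grassmannDeriv R A a ((v ⊗ₜ ι R f) * x)
      = f a • ((v ⊗ₜ 1) * x) - (v ⊗ₜ ι R f) * grassmannDeriv R A a x := by
  induction x with
  | zero => simp
  | add x y hx hy => simp only [mul_add, map_add, hx, hy, smul_add]; abel
  | tmul b l =>
    simp only [grassmannDeriv, Algebra.TensorProduct.tmul_mul_tmul, LinearMap.lTensor_tmul, one_mul]
    rw [ι, CliffordAlgebra.contractLeft_ι_mul, TensorProduct.tmul_sub, TensorProduct.tmul_smul]
    rfl

section Berezin

variable [Fintype J]

/-- The Berezin integral `∫ x dθ`, that is, the coefficient in `A` of the top-degree Grassmann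
monomial `θ_{e 0} θ_{e 1} ⋯`. -/
def berezin {N : ℕ} (e : Fin N ≃ J) : A ⊗[R] ExteriorAlgebra R (J → R) →ₗ[R] A :=
  TensorProduct.rid R A ∘ₗ LinearMap.lTensor A
    (liftAlternating (Pi.single N ((Pi.basisFun R J).reindex e.symm).det))

variable {N : ℕ} (e : Fin N ≃ J)

theorem berezin_tmul_ιMulti [DecidableEq J] (a : A) :
    berezin e (a ⊗ₜ[R] ιMulti R N fun i => Pi.single (e i) 1) = a := by
  have hbasis : (fun i => Pi.single (e i) 1) = ⇑((Pi.basisFun R J).reindex e.symm) := by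
    ext i : 1
    rw [Module.Basis.reindex_apply, Equiv.symm_symm, Pi.basisFun_apply]
  rw [berezin, hbasis, LinearMap.comp_apply, LinearMap.lTensor_tmul, liftAlternating_apply_ιMulti,
    Pi.single_eq_same, Module.Basis.det_self]
  exact (TensorProduct.rid_tmul a (1 : R)).trans (one_smul R a)

theorem berezin_tmul_one_mul (a : A) (x : A ⊗[R] ExteriorAlgebra R (J → R)) :
    berezin e ((a ⊗ₜ 1) * x) = a * berezin e x := by
  induction x with
  | zero => simp
  | add x y hx hy => rw [mul_add, map_add, hx, hy, map_add, mul_add]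
  | tmul b l => simp [berezin]

theorem berezin_mul_tmul_one (a : A) (x : A ⊗[R] ExteriorAlgebra R (J → R)) :
    berezin e (x * (a ⊗ₜ 1)) = berezin e x * a := by
  induction x with
  | zero => simp
  | add x y hx hy => rw [add_mul, map_add, hx, hy, map_add, add_mul]
  | tmul b l => simp [berezin]

end Berezin

variable [DecidableEq J]

variable (R) in
/-- The Grassmann variable `θⱼ`. -/
def grassmannVar (j : J) : ExteriorAlgebra R (J → R) := ι R (Pi.single j 1)

variable [Fintype J]

theorem sum_smul_grassmannVar (v : J → R) : ∑ j, v j • grassmannVar R j = ι R v := by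
  simp only [grassmannVar, ← map_smul, ← map_sum, ← pi_eq_sum_univ' v]

variable (R) in
/-- The generic odd element `∑ⱼ uⱼ θⱼ` of `A ⊗ Λ`. -/
def genericElement (u : J → A) : A ⊗[R] ExteriorAlgebra R (J → R) :=
  ∑ j, u j ⊗ₜ[R] grassmannVar R j

/-- The quadratic Grassmann polynomial `∑ g_{bc} θ_c θ_b` of a bilinear form with matrix `g`. -/
def grassmannForm (g : J → J → R) : ExteriorAlgebra R (J → R) :=
  ∑ b, ι R (g b) * grassmannVar R b

theorem commute_grassmannForm_ι (g : J → J → R) (v : J → R) :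
    Commute (grassmannForm g) (ι R v) :=
  Commute.sum_left _ _ _ fun _ _ => commute_ι_mul_ι _ _ _

theorem commute_grassmannForm_tmul (g : J → J → R) (a : A) {l : ExteriorAlgebra R (J → R)}
    (h : Commute (grassmannForm g) l) : Commute (1 ⊗ₜ[R] grassmannForm g) (a ⊗ₜ[R] l) :=
  (Commute.one_left a).tmul h

theorem commute_grassmannForm_genericElement (g : J → J → R) (u : J → A) :
    Commute (1 ⊗ₜ[R] grassmannForm g) (genericElement R u) :=
  Commute.sum_right _ _ _ fun j _ =>
    commute_grassmannForm_tmul g (u j) (commute_grassmannForm_ι g _)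

theorem ι_mul_genericElement (u : J → A) (v : J → R) :
    (1 ⊗ₜ[R] ι R v) * genericElement R u = -(genericElement R u * (1 ⊗ₜ[R] ι R v)) := by
  simp only [genericElement, Finset.mul_sum, Finset.sum_mul, ← Finset.sum_neg_distrib,
    Algebra.TensorProduct.tmul_mul_tmul, one_mul, mul_one]
  refine Finset.sum_congr rfl fun j _ => ?_
  rw [grassmannVar, ι_mul_ι_swap, TensorProduct.tmul_neg]

theorem grassmannDeriv_genericElement_mul (u : J → A) (a : J)
    (x : A ⊗[R] ExteriorAlgebra R (J → R)) :
    grassmannDeriv R A a (genericElement R u * x)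
      = (u a ⊗ₜ 1) * x - genericElement R u * grassmannDeriv R A a x := by
  simp only [genericElement, grassmannVar, Finset.sum_mul, map_sum, grassmannDeriv_tmul_ι_mul,
    Finset.sum_sub_distrib, Pi.single_apply, ite_smul, one_smul, zero_smul, Finset.sum_ite_eq,
    Finset.mem_univ, if_true]

theorem grassmannDeriv_grassmannForm_mul {g : J → J → R} (hg : ∀ a b, g b a = -g a b) (a : J)
    (x : A ⊗[R] ExteriorAlgebra R (J → R)) :
    grassmannDeriv R A a ((1 ⊗ₜ grassmannForm g) * x)
      = (1 ⊗ₜ grassmannForm g) * grassmannDeriv R A a x - (2 : R) • ((1 ⊗ₜ ι R (g a)) * x) := by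
  have hsplit : (1 : A) ⊗ₜ[R] grassmannForm g
      = ∑ b, (1 ⊗ₜ[R] ι R (g b)) * (1 ⊗ₜ[R] grassmannVar R b) := by
    simp only [grassmannForm, TensorProduct.tmul_sum, Algebra.TensorProduct.tmul_mul_tmul, mul_one]
  have hrow : ∑ b, g b a • ((1 ⊗ₜ[R] grassmannVar R b) * x)
      = -(((1 : A) ⊗ₜ[R] ι R (g a)) * x) := by
    simp only [hg a, neg_smul, neg_mul, Finset.sum_neg_distrib, ← smul_mul_assoc, ← Finset.sum_mul,
      ← TensorProduct.tmul_smul, ← TensorProduct.tmul_sum, sum_smul_grassmannVar]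
  have hterm (b : J) : grassmannDeriv R A a ((1 ⊗ₜ ι R (g b)) * (1 ⊗ₜ grassmannVar R b) * x)
      = g b a • ((1 ⊗ₜ grassmannVar R b) * x)
        - (if a = b then (1 ⊗ₜ ι R (g b)) * x else 0)
        + (1 ⊗ₜ ι R (g b)) * (1 ⊗ₜ grassmannVar R b) * grassmannDeriv R A a x := by
    rw [mul_assoc, grassmannDeriv_tmul_ι_mul, grassmannVar, grassmannDeriv_tmul_ι_mul,
      ← Algebra.TensorProduct.one_def, one_mul, one_mul, mul_sub, mul_smul_comm, Pi.single_apply,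
      mul_assoc]
    split_ifs <;> module
  simp only [hsplit, Finset.sum_mul, map_sum, hterm, Finset.sum_add_distrib,
    Finset.sum_sub_distrib, hrow, Finset.sum_ite_eq, Finset.mem_univ, if_true]
  module

/-- The defining relations of `U(osp(1|2n))` for the family `u` and the form with matrix `g`. -/
def OspRelations (g : J → J → R) (u : J → A) : Prop :=
  ∀ a b c, (u a * u b + u b * u a) * u c
    = u c * (u a * u b + u b * u a) - g a c • u b - g b c • u a

theorem OspRelations.tripleRelation {g : J → J → R} {u : J → A} (h : OspRelations g u) (a : J) :
    TripleRelation (genericElement R u) (1 ⊗ₜ grassmannForm g) (u a ⊗ₜ 1)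
      ((1 ⊗ₜ ι R (g a)) * genericElement R u) := by
  have hanti : genericElement R u * (u a ⊗ₜ 1) + (u a ⊗ₜ 1) * genericElement R u
      = ∑ b, (u a * u b + u b * u a) ⊗ₜ[R] grassmannVar R b := by
    simp only [genericElement, Finset.mul_sum, Finset.sum_mul,
      Algebra.TensorProduct.tmul_mul_tmul, one_mul, mul_one, ← Finset.sum_add_distrib,
      ← TensorProduct.add_tmul, add_comm]
  rw [TripleRelation, hanti]
  simp only [genericElement, grassmannForm, ← sum_smul_grassmannVar, Finset.sum_mul,
    Finset.mul_sum, TensorProduct.tmul_sum, Algebra.TensorProduct.tmul_mul_tmul, mul_one, one_mul,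
    smul_mul_assoc, TensorProduct.tmul_smul]
  rw [add_comm, Finset.sum_comm]
  simp only [← Finset.sum_add_distrib]
  refine Finset.sum_congr rfl fun b _ => Finset.sum_congr rfl fun c _ => ?_
  have hswap : grassmannVar R b * grassmannVar R c = -(grassmannVar R c * grassmannVar R b) :=
    ι_mul_ι_swap _ _
  rw [h, hswap]
  simp only [TensorProduct.tmul_neg, TensorProduct.sub_tmul, TensorProduct.smul_tmul']
  module

section Scasimir

variable {K : Type*} [Field K] [Algebra K A] {g : J → J → K} {u : J → A}

theorem genericElement_mul_centralFactorial_eq_zero (g : J → J → K) (u : J → A) {n : ℕ}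
    (hn : Fintype.card J ≤ 2 * n) :
    genericElement K u * centralFactorial K (genericElement K u) (1 ⊗ₜ grassmannForm g) n = 0 := by
  have hform : grassmannForm g ∈ LinearMap.range (ι K) ^ 2 := by
    rw [pow_two]
    exact sum_mem fun b _ => Submodule.mul_mem_mul ⟨_, rfl⟩ ⟨_, rfl⟩
  have hgen : genericElement K u ∈ (LinearMap.range (ι K)).baseChange A :=
    sum_mem fun j _ => Submodule.tmul_mem_baseChange_of_mem (u j) ⟨_, rfl⟩
  have hmem := mul_mem_baseChange hgen (centralFactorial_mem_baseChange hgen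
    (Submodule.tmul_mem_baseChange_of_mem 1 hform) n)
  have hbot : LinearMap.range (ι K) ^ (2 * n + 1) = (⊥ : Submodule K (ExteriorAlgebra K (J → K))) :=
    exteriorPower_eq_bot_of_finrank_lt (by rw [Module.finrank_fintype_fun_eq_card]; omega)
  rwa [← _root_.pow_succ', hbot, Submodule.baseChange_bot, Submodule.mem_bot] at hmem

variable [CharZero K]

theorem OspRelations.anticommute_centralFactorial (h : OspRelations g u)
    (hg : ∀ a b, g b a = -g a b) {n : ℕ} (hn : Fintype.card J ≤ 2 * n) (a : J) :
    (u a ⊗ₜ 1) * centralFactorial K (genericElement K u) (1 ⊗ₜ grassmannForm g) n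
      + centralFactorial K (genericElement K u) (1 ⊗ₜ grassmannForm g) n * (u a ⊗ₜ 1) = 0 := by
  have key := deriv_mul_centralFactorial (h.tripleRelation a)
    (commute_grassmannForm_genericElement g u)
    (commute_grassmannForm_tmul g (u a) (Commute.one_right _))
    (commute_grassmannForm_tmul g 1 (commute_grassmannForm_ι g (g a)))
    (ι_mul_genericElement u (g a)) (grassmannDeriv K A a) (grassmannDeriv_one a)
    (grassmannDeriv_genericElement_mul u a) (grassmannDeriv_grassmannForm_mul hg a) n
  rw [genericElement_mul_centralFactorial_eq_zero g u hn, map_zero, smul_zero] at key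
  exact (smul_eq_zero.mp key.symm).resolve_left (by exact_mod_cast Nat.succ_ne_zero (2 * n))

/-- The Scasimir of the family `u` of odd generators: the Berezin integral of the central
factorial of the generic odd element. The ordering `e` of the indices fixes its sign. -/
def scasimir (g : J → J → K) (u : J → A) {n : ℕ} (e : Fin (2 * n) ≃ J) : A :=
  berezin e (centralFactorial K (genericElement K u) (1 ⊗ₜ grassmannForm g) n)

theorem OspRelations.anticommute_scasimir (h : OspRelations g u) (hg : ∀ a b, g b a = -g a b)
    {n : ℕ} (e : Fin (2 * n) ≃ J) (a : J) :
    u a * scasimir g u e + scasimir g u e * u a = 0 := by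
  have hcard : Fintype.card J ≤ 2 * n := by rw [← Fintype.card_congr e, Fintype.card_fin]
  rw [scasimir, ← berezin_tmul_one_mul, ← berezin_mul_tmul_one, ← map_add,
    h.anticommute_centralFactorial hg hcard a, map_zero]

end Scasimir

section GenericPower

/-- The antisymmetrized monomial `[b₁ … b_p]` in a family `u` of ring elements. -/
def altProd {I : Type*} (u : I → A) (p : ℕ) (b : Fin p → I) : A :=
  ∑ s : Equiv.Perm (Fin p), (Equiv.Perm.sign s : ℤ) • (List.ofFn fun i => u (b (s i))).prod

theorem prod_ofFn_tmul {L : Type*} [Ring L] [Algebra R L] {p : ℕ} (a : Fin p → A) (b : Fin p → L) :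
    (List.ofFn fun i => a i ⊗ₜ[R] b i).prod = (List.ofFn a).prod ⊗ₜ[R] (List.ofFn b).prod := by
  induction p with
  | zero => simp [Algebra.TensorProduct.one_def]
  | succ p ih =>
    simp only [List.ofFn_succ, List.prod_cons, ih, Algebra.TensorProduct.tmul_mul_tmul]

theorem sum_tmul_ι_pow {I M : Type*} [AddCommGroup M] [Module R M] (u : I → A) {p : ℕ}
    (b : Fin p → I) (v : Fin p → M) :
    (∑ i, u (b i) ⊗ₜ[R] ι R (v i)) ^ p = altProd u p b ⊗ₜ[R] ιMulti R p v := by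
  have hzero (r : Fin p → Fin p) (hr : ¬ r.Bijective) : ιMulti R p (fun i => v (r i)) = 0 :=
    AlternatingMap.map_eq_zero_of_not_injective _ _ fun h =>
      hr (Finite.injective_iff_bijective.mp h.of_comp)
  rw [← MultilinearMap.mkPiAlgebraFin_apply_const (R := R), MultilinearMap.map_sum]
  simp only [MultilinearMap.mkPiAlgebraFin_apply, prod_ofFn_tmul, ← ιMulti_apply]
  rw [altProd, TensorProduct.sum_tmul]
  symm
  refine Finset.sum_of_injOn (fun s => (s : Fin p → Fin p))
    (fun _ _ _ _ h => DFunLike.coe_injective h) (by simp) ?_ ?_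
  · intro r _ hr
    rw [hzero r fun h => hr ⟨Equiv.ofBijective r h, by simp⟩, TensorProduct.tmul_zero]
  · intro s _
    have hperm : ιMulti R p (fun i => v (s i)) = Equiv.Perm.sign s • ιMulti R p v :=
      (ιMulti R p).map_perm v s
    rw [hperm, Units.smul_def, TensorProduct.tmul_smul, TensorProduct.smul_tmul']

theorem pow_mul_eq_pow_mul {B : Type*} [Monoid B] {x y z : B} (h : x * z = y * z)
    (hc : Commute y z) (k : ℕ) : x ^ k * z = y ^ k * z := by
  induction k with
  | zero => rw [pow_zero, pow_zero]
  | succ k ih =>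
    rw [_root_.pow_succ', mul_assoc, ih, (hc.pow_left k).eq, ← mul_assoc, h, mul_assoc,
      ← (hc.pow_left k).eq, ← mul_assoc, ← _root_.pow_succ' y k]

theorem genericElement_pow_mul (u : J → A) {p : ℕ} {b : Fin p → J} (hb : Function.Injective b)
    {x : ExteriorAlgebra R (J → R)} (hx : ∀ j ∉ Set.range b, grassmannVar R j * x = 0)
    (hc : ∀ j, Commute x (grassmannVar R j)) :
    genericElement R u ^ p * (1 ⊗ₜ x)
      = altProd u p b ⊗ₜ ((List.ofFn fun i => grassmannVar R (b i)).prod * x) := by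
  have hrestrict : genericElement R u * (1 ⊗ₜ x)
      = (∑ i, u (b i) ⊗ₜ grassmannVar R (b i)) * (1 ⊗ₜ x) := by
    rw [genericElement, Finset.sum_mul, Finset.sum_mul]
    refine (Finset.sum_of_injOn b hb.injOn (by simp) (fun j _ hj => ?_) (by simp)).symm
    rw [Algebra.TensorProduct.tmul_mul_tmul, hx j (by simpa using hj), TensorProduct.tmul_zero]
  have hcomm : Commute (∑ i, u (b i) ⊗ₜ[R] grassmannVar R (b i)) (1 ⊗ₜ x) :=
    Commute.sum_left _ _ _ fun i _ => (Commute.one_right _).tmul (hc _).symm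
  have hpow : (∑ i, u (b i) ⊗ₜ[R] grassmannVar R (b i)) ^ p = _ :=
    sum_tmul_ι_pow u b fun i => Pi.single (b i) 1
  rw [pow_mul_eq_pow_mul hrestrict hcomm, hpow, ιMulti_apply, Algebra.TensorProduct.tmul_mul_tmul,
    mul_one]
  rfl

end GenericPower

end Grassmann

section ConjugatePairs

/-- The indices `0, …, 2n - 1` grouped into conjugate pairs: `(i, 0) ↦ i` and `(i, 1) ↦ i + n`. -/
def pairIndex (n : ℕ) : Fin n × Fin 2 ≃ Fin (2 * n) :=
  (Equiv.prodComm _ _).trans finProdFinEquiv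

/-- The enumeration `0, n, 1, n + 1, …, n - 1, 2n - 1` of the indices by conjugate pairs. -/
def pairOrder (n : ℕ) : Fin (2 * n) ≃ Fin (2 * n) :=
  (finCongr (mul_comm 2 n)).trans (finProdFinEquiv.symm.trans (pairIndex n))

theorem ofFn_pairOrder (n : ℕ) :
    List.ofFn (pairOrder n)
      = (List.finRange n).flatMap fun i => [pairIndex n (i, 0), pairIndex n (i, 1)] := by
  have hval (i : Fin n) (k : Fin 2) (h : 2 * (i : ℕ) + k < 2 * n) :
      pairOrder n ⟨2 * i + k, h⟩ = pairIndex n (i, k) := by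
    have hcast : finCongr (mul_comm 2 n) ⟨2 * i + k, h⟩ = finProdFinEquiv (i, k) :=
      Fin.ext (add_comm _ _)
    rw [pairOrder, Equiv.trans_apply, hcast, Equiv.trans_apply, Equiv.symm_apply_apply]
  rw [List.ofFn_mul', List.flatMap_def, ← List.ofFn_id, List.map_ofFn]
  simp only [hval, List.ofFn_succ, List.ofFn_zero]
  rfl

variable {R A : Type*} [CommRing R] [Ring A] [Algebra R A] {n : ℕ}

variable (R) in
/-- The product `π_i = θ_i θ_{i+n}` of two conjugate Grassmann variables. -/
def grassmannPair (i : Fin n) : ExteriorAlgebra R (Fin (2 * n) → R) :=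
  grassmannVar R (pairIndex n (i, 0)) * grassmannVar R (pairIndex n (i, 1))

theorem commute_grassmannPair_grassmannVar (i : Fin n) (j : Fin (2 * n)) :
    Commute (grassmannPair R i) (grassmannVar R j) :=
  commute_ι_mul_ι _ _ _

theorem commute_grassmannPair (i j : Fin n) : Commute (grassmannPair R i) (grassmannPair R j) :=
  (commute_grassmannPair_grassmannVar i _).mul_right (commute_grassmannPair_grassmannVar i _)

theorem grassmannVar_mul_grassmannPair (i : Fin n) (k : Fin 2) :
    grassmannVar R (pairIndex n (i, k)) * grassmannPair R i = 0 := by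
  have hsq (j : Fin (2 * n)) : grassmannVar R j * grassmannVar R j = 0 :=
    ExteriorAlgebra.ι_sq_zero _
  fin_cases k
  · exact (mul_assoc _ _ _).symm.trans (by rw [Fin.zero_eta, hsq, zero_mul])
  · exact (commute_grassmannPair_grassmannVar i _).eq.symm.trans
      (by rw [Fin.mk_one, grassmannPair, mul_assoc, hsq, mul_zero])

theorem grassmannPair_mul_self (i : Fin n) : grassmannPair R i * grassmannPair R i = 0 := by
  nth_rewrite 1 [grassmannPair]
  rw [mul_assoc, grassmannVar_mul_grassmannPair, mul_zero]

theorem grassmannVar_mul_prod_grassmannPair {m : List (Fin n)} {i : Fin n} (hi : i ∈ m)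
    (k : Fin 2) : grassmannVar R (pairIndex n (i, k)) * (m.map (grassmannPair R)).prod = 0 := by
  obtain ⟨m₁, m₂, rfl⟩ := List.append_of_mem hi
  have hcomm : Commute (m₁.map (grassmannPair R)).prod (grassmannVar R (pairIndex n (i, k))) :=
    Commute.list_prod_left _ _ (by simp [commute_grassmannPair_grassmannVar])
  rw [List.map_append, List.prod_append, List.map_cons, List.prod_cons, ← mul_assoc, ← hcomm.eq,
    mul_assoc, ← mul_assoc (grassmannVar R _), grassmannVar_mul_grassmannPair, zero_mul, mul_zero]

theorem prod_map_flatMap_pairIndex (l : List (Fin n)) :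
    ((l.flatMap fun i => [pairIndex n (i, 0), pairIndex n (i, 1)]).map (grassmannVar R)).prod
      = (l.map (grassmannPair R)).prod := by
  induction l with
  | nil => rfl
  | cons i l ih =>
    rw [List.flatMap_cons, List.map_append, List.prod_append, ih, List.map_cons, List.prod_cons]
    simp [grassmannPair]

theorem prod_map_grassmannPair_finRange :
    ((List.finRange n).map (grassmannPair R)).prod
      = ExteriorAlgebra.ιMulti R (2 * n) fun i => Pi.single (pairOrder n i) 1 := by
  rw [← prod_map_flatMap_pairIndex, ← ofFn_pairOrder, List.map_ofFn, ExteriorAlgebra.ιMulti_apply]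
  rfl

/-- `b` lists the indices of the conjugate pairs in `l`, and `m` holds the remaining pairs. -/
theorem berezin_genericElement_pow_mul (u : Fin (2 * n) → A) {p : ℕ} (b : Fin p → Fin (2 * n))
    (l m : List (Fin n))
    (hb : List.ofFn b = l.flatMap fun i => [pairIndex n (i, 0), pairIndex n (i, 1)])
    (hlm : (l ++ m).Perm (List.finRange n)) :
    berezin (pairOrder n) (genericElement R u ^ p * (1 ⊗ₜ (m.map (grassmannPair R)).prod))
      = altProd u p b := by
  have hinj : Function.Injective b := by
    have hperm := hlm.flatMap_right fun i => [pairIndex n (i, 0), pairIndex n (i, 1)]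
    rw [List.flatMap_append, ← hb, ← ofFn_pairOrder] at hperm
    have hnodup := hperm.nodup_iff.mpr (List.nodup_ofFn.mpr (pairOrder n).injective)
    exact List.nodup_ofFn.mp hnodup.of_append_left
  have hx : ∀ j ∉ Set.range b, grassmannVar R j * (m.map (grassmannPair R)).prod = 0 := by
    intro j hj
    obtain ⟨⟨i, k⟩, rfl⟩ := (pairIndex n).surjective j
    have hl : i ∉ l := by
      refine fun hi => hj (List.mem_ofFn.mp ?_)
      rw [hb, List.mem_flatMap]
      exact ⟨i, hi, by fin_cases k <;> simp⟩
    have hmem : i ∈ l ++ m := hlm.mem_iff.mpr (List.mem_finRange i)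
    exact grassmannVar_mul_prod_grassmannPair ((List.mem_append.mp hmem).resolve_left hl) k
  have hcomm (j : Fin (2 * n)) : Commute (m.map (grassmannPair R)).prod (grassmannVar R j) :=
    Commute.list_prod_left _ _ (by simp [commute_grassmannPair_grassmannVar])
  have htop : (List.ofFn fun i => grassmannVar R (b i)).prod * (m.map (grassmannPair R)).prod
      = ExteriorAlgebra.ιMulti R (2 * n) fun i => Pi.single (pairOrder n i) 1 := by
    have hb' := congrArg (List.map (grassmannVar R)) hb
    rw [List.map_ofFn] at hb'
    change (List.ofFn (grassmannVar R ∘ b)).prod * _ = _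
    rw [hb', prod_map_flatMap_pairIndex, ← List.prod_append, ← List.map_append,
      ← prod_map_grassmannPair_finRange]
    exact (hlm.map _).prod_eq' (List.pairwise_map.mpr
      (List.pairwise_of_forall fun i j => commute_grassmannPair i j))
  rw [genericElement_pow_mul u hinj hx hcomm, htop, berezin_tmul_ιMulti]

theorem berezin_genericElement_pow (u : Fin (2 * n) → A) {p : ℕ} (b : Fin p → Fin (2 * n))
    (hb : List.ofFn b
      = (List.finRange n).flatMap fun i => [pairIndex n (i, 0), pairIndex n (i, 1)]) :
    berezin (pairOrder n) (genericElement R u ^ p) = altProd u p b := by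
  have h := berezin_genericElement_pow_mul (R := R) u b _ [] hb (by rw [List.append_nil])
  rwa [List.map_nil, List.prod_nil, ← Algebra.TensorProduct.one_def, mul_one] at h

theorem gmat_antisymm (n : ℕ) (a b : Fin (2 * n)) : gmat n b a = -gmat n a b := by
  simp only [gmat]
  split_ifs <;> first | omega | simp

theorem pairIndex_val (i : Fin n) (k : Fin 2) : (pairIndex n (i, k) : ℕ) = i + n * k := rfl

theorem gmat_pairIndex_zero (i : Fin n) :
    gmat n (pairIndex n (i, 0)) = -Pi.single (pairIndex n (i, 1)) 1 := by
  ext j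
  have hi := i.isLt
  simp only [gmat, pairIndex_val, Pi.neg_apply, Pi.single_apply, Fin.ext_iff, Fin.val_zero,
    Fin.val_one, mul_zero, mul_one, add_zero]
  split_ifs <;> first | omega | simp

theorem gmat_pairIndex_one (i : Fin n) :
    gmat n (pairIndex n (i, 1)) = Pi.single (pairIndex n (i, 0)) 1 := by
  ext j
  have hi := i.isLt
  simp only [gmat, pairIndex_val, Pi.single_apply, Fin.ext_iff, Fin.val_zero,
    Fin.val_one, mul_zero, mul_one, add_zero]
  split_ifs <;> first | omega | simp

theorem grassmannForm_gmat (n : ℕ) :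
    grassmannForm (gmat n) = (2 : ℚ) • ∑ i, grassmannPair ℚ i := by
  rw [grassmannForm, ← (pairIndex n).sum_comp, Fintype.sum_prod_type, Finset.smul_sum]
  refine Finset.sum_congr rfl fun i _ => ?_
  have hswap : grassmannVar ℚ (pairIndex n (i, 1)) * grassmannVar ℚ (pairIndex n (i, 0))
      = -grassmannPair ℚ i := ι_mul_ι_swap _ _
  rw [Fin.sum_univ_two, gmat_pairIndex_zero, gmat_pairIndex_one, map_neg, neg_mul]
  change -(grassmannVar ℚ _ * grassmannVar ℚ _) + grassmannVar ℚ _ * grassmannVar ℚ _ = _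
  rw [hswap, neg_neg, two_smul]
  rfl

theorem add_add_sq_of_mul_self_eq_zero {B : Type*} [Ring B] {p q r : B} (hp : p * p = 0)
    (hq : q * q = 0) (hr : r * r = 0) (hpq : Commute p q) (hpr : Commute p r)
    (hqr : Commute q r) : (p + q + r) ^ 2 = 2 • (p * q + p * r + q * r) := by
  simp only [pow_two, add_mul, mul_add, hp, hq, hr, ← hpq.eq, ← hpr.eq, ← hqr.eq]
  abel

theorem add_add_cube_of_mul_self_eq_zero {B : Type*} [Ring B] {p q r : B} (hp : p * p = 0)
    (hq : q * q = 0) (hr : r * r = 0) (hpq : Commute p q) (hpr : Commute p r)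
    (hqr : Commute q r) : (p + q + r) ^ 3 = 6 • (p * (q * r)) := by
  have hsq {x : B} (hx : x * x = 0) (y : B) : x * (x * y) = 0 := by
    rw [← mul_assoc, hx, zero_mul]
  rw [_root_.pow_succ', add_add_sq_of_mul_self_eq_zero hp hq hr hpq hpr hqr]
  simp only [mul_smul_comm, add_mul, mul_add, hsq hp, hsq hq, hq, hr,
    hpq.symm.left_comm, hpr.symm.left_comm, hqr.symm.left_comm, ← hqr.eq, mul_zero]
  abel

end ConjugatePairs

section RankThree

variable {A : Type*} [Ring A] [Algebra ℚ A] (u : Fin (2 * 3) → A)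

theorem grassmannForm_gmat_three_sq :
    grassmannForm (gmat 3) ^ 2 = (8 : ℚ) • (grassmannPair ℚ 0 * grassmannPair ℚ 1
      + grassmannPair ℚ 0 * grassmannPair ℚ 2 + grassmannPair ℚ 1 * grassmannPair ℚ 2) := by
  rw [grassmannForm_gmat, Fin.sum_univ_three, smul_pow, add_add_sq_of_mul_self_eq_zero
    (grassmannPair_mul_self 0) (grassmannPair_mul_self 1) (grassmannPair_mul_self 2)
    (commute_grassmannPair 0 1) (commute_grassmannPair 0 2) (commute_grassmannPair 1 2)]
  module

theorem grassmannForm_gmat_three_cube :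
    grassmannForm (gmat 3) ^ 3
      = (48 : ℚ) • (grassmannPair ℚ 0 * (grassmannPair ℚ 1 * grassmannPair ℚ 2)) := by
  rw [grassmannForm_gmat, Fin.sum_univ_three, smul_pow, add_add_cube_of_mul_self_eq_zero
    (grassmannPair_mul_self 0) (grassmannPair_mul_self 1) (grassmannPair_mul_self 2)
    (commute_grassmannPair 0 1) (commute_grassmannPair 0 2) (commute_grassmannPair 1 2)]
  module

theorem berezin_genericElement_pow_six :
    berezin (pairOrder 3) (genericElement ℚ u ^ 6) = altProd u 6 ![0, 3, 1, 4, 2, 5] :=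
  berezin_genericElement_pow u ![0, 3, 1, 4, 2, 5] (by decide)

theorem berezin_genericElement_pow_four_mul :
    berezin (pairOrder 3) (genericElement ℚ u ^ 4 * (1 ⊗ₜ grassmannForm (gmat 3)))
      = (2 : ℚ) • (altProd u 4 ![0, 3, 1, 4] + altProd u 4 ![0, 3, 2, 5]
        + altProd u 4 ![1, 4, 2, 5]) := by
  have h01 := berezin_genericElement_pow_mul (R := ℚ) u ![0, 3, 1, 4] [0, 1] [2]
    (by decide) (by decide)
  have h02 := berezin_genericElement_pow_mul (R := ℚ) u ![0, 3, 2, 5] [0, 2] [1]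
    (by decide) (by decide)
  have h12 := berezin_genericElement_pow_mul (R := ℚ) u ![1, 4, 2, 5] [1, 2] [0]
    (by decide) (by decide)
  rw [← h01, ← h02, ← h12, grassmannForm_gmat, Fin.sum_univ_three]
  simp only [List.map_cons, List.map_nil, List.prod_cons, List.prod_nil, mul_one,
    TensorProduct.tmul_smul, TensorProduct.tmul_add, mul_smul_comm, mul_add, map_smul, map_add]
  module

theorem berezin_genericElement_sq_mul :
    berezin (pairOrder 3) (genericElement ℚ u ^ 2 * (1 ⊗ₜ grassmannForm (gmat 3)) ^ 2)
      = (8 : ℚ) • (altProd u 2 ![0, 3] + altProd u 2 ![1, 4] + altProd u 2 ![2, 5]) := by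
  have h0 := berezin_genericElement_pow_mul (R := ℚ) u ![0, 3] [0] [1, 2] (by decide) (by decide)
  have h1 := berezin_genericElement_pow_mul (R := ℚ) u ![1, 4] [1] [0, 2] (by decide) (by decide)
  have h2 := berezin_genericElement_pow_mul (R := ℚ) u ![2, 5] [2] [0, 1] (by decide) (by decide)
  rw [← h0, ← h1, ← h2, Algebra.TensorProduct.tmul_pow, one_pow, grassmannForm_gmat_three_sq]
  simp only [List.map_cons, List.map_nil, List.prod_cons, List.prod_nil, mul_one,
    TensorProduct.tmul_smul, TensorProduct.tmul_add, mul_smul_comm, mul_add, map_smul, map_add]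
  module

variable (A) in
theorem berezin_grassmannForm_cube :
    berezin (A := A) (pairOrder 3) ((1 ⊗ₜ grassmannForm (gmat 3)) ^ 3) = (48 : ℚ) • 1 := by
  have htop := berezin_tmul_ιMulti (R := ℚ) (pairOrder 3) (1 : A)
  rw [← prod_map_grassmannPair_finRange] at htop
  rw [Algebra.TensorProduct.tmul_pow, one_pow, grassmannForm_gmat_three_cube,
    TensorProduct.tmul_smul, map_smul]
  exact congrArg _ (by simpa [List.finRange_succ] using htop)

theorem scasimir_gmat_three :
    scasimir (gmat 3) u (pairOrder 3)
      = altProd u 6 ![0, 3, 1, 4, 2, 5]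
        - (35 / 2 : ℚ) • (altProd u 4 ![0, 3, 1, 4] + altProd u 4 ![0, 3, 2, 5]
          + altProd u 4 ![1, 4, 2, 5])
        + (259 / 2 : ℚ) • (altProd u 2 ![0, 3] + altProd u 2 ![1, 4] + altProd u 2 ![2, 5])
        - (675 / 4 : ℚ) • 1 := by
  rw [scasimir, centralFactorial_three (commute_grassmannForm_genericElement (gmat 3) u)]
  simp only [map_sub, map_add, map_smul, berezin_genericElement_pow_six,
    berezin_genericElement_pow_four_mul, berezin_genericElement_sq_mul,
    berezin_grassmannForm_cube]
  module

end RankThree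

theorem ospRelations_σ (n : ℕ) : OspRelations (gmat n) (σ n) := by
  intro a b c
  have hrel := RingQuot.mkAlgHom_rel ℚ (OspRel.rel a b c)
  simp only [← Algebra.smul_def, map_mul, map_add, map_sub, map_smul] at hrel
  exact hrel

/-- The Scasimir of `U(osp(1|2n))`, with sign fixed by the ordering `0, n, 1, n + 1, …`. -/
def ospScasimir (n : ℕ) : U n :=
  scasimir (gmat n) (σ n) (pairOrder n)

theorem stmt8_general (n : ℕ) (a : Fin (2 * n)) :
    σ n a * ospScasimir n + ospScasimir n * σ n a = 0 :=
  (ospRelations_σ n).anticommute_scasimir (gmat_antisymm n) (pairOrder n) a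

theorem ospScasimir_three : ospScasimir 3 = Sc3 := by
  unfold Sc3
  exact scasimir_gmat_three (σ 3)

/-- In `U(osp(1|6))`, the Scasimir `Sc3` anticommutes with every fermionic
generator `σₐ`, `a ∈ {1,…,6}`. -/
theorem stmt8 : ∀ a : Fin (2*3), σ 3 a * Sc3 + Sc3 * σ 3 a = 0 := by
  rw [← ospScasimir_three]
  exact stmt8_general 3

end
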